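/- Proposition 1 (goodput gain of limited feedback beamforming with other-cell interference and feedback delay D): with the notation below, the ergodic goodput gain satisfies Δρ(D) ≤ a·(√λ)^{2D} + b·(√λ)^D, where a = r·Σ_{k1D,k2D} (max_{k10,k20} C(k1D,k10,k2D,k20))·π and b = r·Σ_{k1D,k10,k2D} (max_{k20} C(k1D,k10,k2D,k20))·π²·√π + Σ_{k1D,k2D,k20} (max_{k10} C(k1D,k10,k2D,k20))·π²·√π. -/

import Mathlib

/-!
Write `E = π (P ^ D - π)` for the deviation of the joint law of the delayed and the current state
from the uniform law `π²`. The goodput is bilinear in the laws of the two channels, and in `Δρ` the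
zeroth order terms cancel, leaving `r G(E, E) + r G(π², E) + G(E, π²)`. In each term Hölder's
inequality replaces the sum over a current state by a maximum times the `ℓ¹` norm of a row of `E`,
which the convergence bound controls by `√π (√λ) ^ D`.
-/

section

open Finset

theorem sum_mul_le_sup'_mul {ι R : Type*} [Ring R] [LinearOrder R] [IsOrderedRing R]
    {s : Finset ι} (hs : s.Nonempty) {f e : ι → R} {A : R}
    (hf : ∀ k ∈ s, 0 ≤ f k) (he : ∑ k ∈ s, |e k| ≤ A) :
    ∑ k ∈ s, f k * e k ≤ s.sup' hs f * A := by
  have hsup : 0 ≤ s.sup' hs f := by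
    obtain ⟨k, hk⟩ := hs
    exact (hf k hk).trans (le_sup' f hk)
  calc ∑ k ∈ s, f k * e k
      ≤ ∑ k ∈ s, s.sup' hs f * |e k| := sum_le_sum fun k hk =>
        (mul_le_mul_of_nonneg_left (le_abs_self _) (hf k hk)).trans
          (mul_le_mul_of_nonneg_right (le_sup' f hk) (abs_nonneg _))
    _ = s.sup' hs f * ∑ k ∈ s, |e k| := (mul_sum ..).symm
    _ ≤ s.sup' hs f * A := mul_le_mul_of_nonneg_left he hsup

theorem sum_sum_mul_mul_le_sup'_sup'_mul_mul {ι κ R : Type*}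
    [Ring R] [LinearOrder R] [IsOrderedRing R]
    {s : Finset ι} {t : Finset κ} (hs : s.Nonempty) (ht : t.Nonempty)
    {f : ι → κ → R} {u : ι → R} {v : κ → R} {A B : R}
    (hf : ∀ i ∈ s, ∀ j ∈ t, 0 ≤ f i j) (hu : ∑ i ∈ s, |u i| ≤ A) (hv : ∑ j ∈ t, |v j| ≤ B) :
    ∑ i ∈ s, ∑ j ∈ t, f i j * u i * v j ≤ (s.sup' hs fun i => t.sup' ht (f i)) * (A * B) := by
  calc ∑ i ∈ s, ∑ j ∈ t, f i j * u i * v j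
      ≤ ∑ i ∈ s, t.sup' ht (f i) * (|u i| * B) := sum_le_sum fun i hi => by
        simp only [mul_assoc]
        refine sum_mul_le_sup'_mul ht (hf i hi) ?_
        simp only [abs_mul, ← mul_sum]
        exact mul_le_mul_of_nonneg_left hv (abs_nonneg _)
    _ ≤ (s.sup' hs fun i => t.sup' ht (f i)) * (A * B) := by
        refine sum_mul_le_sup'_mul hs (fun i hi => ?_) ?_
        · obtain ⟨j, hj⟩ := ht
          exact (hf i hi j hj).trans (le_sup' (f i) hj)
        · have hB : 0 ≤ B := (sum_nonneg fun j _ => abs_nonneg (v j)).trans hv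
          simp only [abs_mul, abs_abs, abs_of_nonneg hB, ← sum_mul]
          exact mul_le_mul_of_nonneg_right hu hB

theorem sum_abs_one_div_mul_le {ι : Type*} {s : Finset ι} {x : ι → ℝ} {n c : ℝ}
    (hn : 0 < n) (hc : 0 ≤ c) (h : (∑ k ∈ s, |x k|) ^ 2 ≤ n * c ^ 2) :
    ∑ k ∈ s, |1 / n * x k| ≤ √(1 / n) * c := by
  have hn' : 0 ≤ 1 / n := by positivity
  refine le_of_sq_le_sq ?_ (by positivity)
  calc (∑ k ∈ s, |1 / n * x k|) ^ 2
      = (1 / n) ^ 2 * (∑ k ∈ s, |x k|) ^ 2 := by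
        simp only [abs_mul, abs_of_nonneg hn', ← mul_sum, mul_pow]
    _ ≤ (1 / n) ^ 2 * (n * c ^ 2) := mul_le_mul_of_nonneg_left h (sq_nonneg _)
    _ = 1 / n * c ^ 2 := by field_simp
    _ = (√(1 / n) * c) ^ 2 := by rw [mul_pow, Real.sq_sqrt hn']

section GoodputAverage

variable {α β γ δ : Type*} [Fintype α] [Fintype β] [Fintype γ] [Fintype δ]

/-- The goodput `C` averaged with weight `u` on the delayed and current states of the first channel
and weight `v` on those of the second. The weights are signed, so that deviations from the
stationary law are allowed. -/
def goodputAverage (C : α × β × γ × δ → ℝ) (u : α → β → ℝ) (v : γ → δ → ℝ) : ℝ :=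
  ∑ a, ∑ b, ∑ c, ∑ d, C (a, b, c, d) * u a b * v c d

variable {C : α × β × γ × δ → ℝ} {u : α → β → ℝ} {v : γ → δ → ℝ} {A B : ℝ}

theorem goodputAverage_le_sup'_sup'_mul_mul [Nonempty β] [Nonempty δ] (hC : ∀ x, 0 ≤ C x)
    (hu : ∀ a, ∑ b, |u a b| ≤ A) (hv : ∀ c, ∑ d, |v c d| ≤ B) :
    goodputAverage C u v ≤
      (∑ a, ∑ c, univ.sup' univ_nonempty fun b => univ.sup' univ_nonempty fun d =>
        C (a, b, c, d)) * (A * B) := by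
  simp only [goodputAverage, sum_mul]
  refine sum_le_sum fun a _ => ?_
  rw [sum_comm]
  exact sum_le_sum fun c _ => sum_sum_mul_mul_le_sup'_sup'_mul_mul _ _
    (fun b _ d _ => hC (a, b, c, d)) (hu a) (hv c)

theorem goodputAverage_le_sup'_right_mul [Nonempty δ] (hC : ∀ x, 0 ≤ C x)
    (hu : ∀ a b, 0 ≤ u a b) (hv : ∀ c, ∑ d, |v c d| ≤ B) :
    goodputAverage C u v ≤
      (∑ a, ∑ b, ∑ c, (univ.sup' univ_nonempty fun d => C (a, b, c, d)) * u a b) * B := by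
  simp only [goodputAverage, sum_mul]
  refine sum_le_sum fun a _ => sum_le_sum fun b _ => sum_le_sum fun c _ => ?_
  calc ∑ d, C (a, b, c, d) * u a b * v c d
      = (∑ d, C (a, b, c, d) * v c d) * u a b := by
        rw [sum_mul]
        exact sum_congr rfl fun d _ => mul_right_comm ..
    _ ≤ (univ.sup' univ_nonempty fun d => C (a, b, c, d)) * B * u a b :=
        mul_le_mul_of_nonneg_right
          (sum_mul_le_sup'_mul _ (fun d _ => hC (a, b, c, d)) (hv c)) (hu a b)
    _ = (univ.sup' univ_nonempty fun d => C (a, b, c, d)) * u a b * B := mul_right_comm ..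

theorem goodputAverage_le_sup'_left_mul [Nonempty β] (hC : ∀ x, 0 ≤ C x)
    (hu : ∀ a, ∑ b, |u a b| ≤ A) (hv : ∀ c d, 0 ≤ v c d) :
    goodputAverage C u v ≤
      (∑ a, ∑ c, ∑ d, (univ.sup' univ_nonempty fun b => C (a, b, c, d)) * v c d) * A := by
  simp only [goodputAverage, sum_mul]
  refine sum_le_sum fun a _ => ?_
  rw [sum_comm]
  refine sum_le_sum fun c _ => ?_
  rw [sum_comm]
  refine sum_le_sum fun d _ => ?_
  calc ∑ b, C (a, b, c, d) * u a b * v c d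
      = (∑ b, C (a, b, c, d) * u a b) * v c d := (sum_mul ..).symm
    _ ≤ (univ.sup' univ_nonempty fun b => C (a, b, c, d)) * A * v c d :=
        mul_le_mul_of_nonneg_right
          (sum_mul_le_sup'_mul _ (fun b _ => hC (a, b, c, d)) (hu a)) (hv c d)
    _ = (univ.sup' univ_nonempty fun b => C (a, b, c, d)) * v c d * A := mul_right_comm ..

end GoodputAverage

section GoodputGain

variable {ι : Type*} [Fintype ι]

/-- The ergodic goodput gain `Δρ = r ρ₁ + (1 - r) ρ₂ - ρ∞`, where `Q` stands for the `D`-step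
transition matrix `P ^ D` and `p` for the stationary probability `π` of each state. -/
def goodputGain (C : ι × ι × ι × ι → ℝ) (Q : Matrix ι ι ℝ) (r p : ℝ) : ℝ :=
  r * (∑ k1D, ∑ k10, ∑ k2D, ∑ k20,
      C (k1D, k10, k2D, k20) * Q k1D k10 * Q k2D k20 * p ^ 2)
    + (1 - r) * (∑ k1D, ∑ k10, ∑ k2D, ∑ k20, C (k1D, k10, k2D, k20) * Q k1D k10 * p ^ 3)
    - (∑ k1D, ∑ k10, ∑ k2D, ∑ k20, C (k1D, k10, k2D, k20) * p ^ 4)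

/-- The coefficient `a` of `(√λ) ^ (2 * D)` in the bound on the goodput gain, with `p` in the role
of `π`. -/
noncomputable def goodputGainQuadraticCoeff [Nonempty ι] (C : ι × ι × ι × ι → ℝ) (r p : ℝ) : ℝ :=
  r * ∑ k1D, ∑ k2D,
    (univ.sup' univ_nonempty fun k10 => univ.sup' univ_nonempty fun k20 =>
      C (k1D, k10, k2D, k20)) * p

/-- The coefficient `b` of `(√λ) ^ D` in the bound on the goodput gain, with `p` in the role
of `π`. -/
noncomputable def goodputGainLinearCoeff [Nonempty ι] (C : ι × ι × ι × ι → ℝ) (r p : ℝ) : ℝ :=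
  r * (∑ k1D, ∑ k10, ∑ k2D,
      (univ.sup' univ_nonempty fun k20 => C (k1D, k10, k2D, k20)) * p ^ 2 * √p)
    + (∑ k1D, ∑ k2D, ∑ k20,
      (univ.sup' univ_nonempty fun k10 => C (k1D, k10, k2D, k20)) * p ^ 2 * √p)

theorem goodputGain_eq_goodputAverage_deviation (C : ι × ι × ι × ι → ℝ) (Q : Matrix ι ι ℝ)
    (r p : ℝ) :
    goodputGain C Q r p =
      r * goodputAverage C (fun l m => p * (Q l m - p)) (fun l m => p * (Q l m - p))
        + r * goodputAverage C (fun _ _ => p ^ 2) (fun l m => p * (Q l m - p))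
        + goodputAverage C (fun l m => p * (Q l m - p)) (fun _ _ => p ^ 2) := by
  simp only [goodputGain, goodputAverage, mul_sum, ← sum_add_distrib, ← sum_sub_distrib]
  refine sum_congr rfl fun a _ => sum_congr rfl fun b _ =>
    sum_congr rfl fun c _ => sum_congr rfl fun d _ => ?_
  ring

theorem goodputGain_le_of_sum_abs_deviation_le [Nonempty ι] {C : ι × ι × ι × ι → ℝ}
    (hC : ∀ x, 0 ≤ C x) {Q : Matrix ι ι ℝ} {r p s : ℝ} (hr : 0 ≤ r) (hp : 0 ≤ p)
    (hQ : ∀ l, ∑ m, |p * (Q l m - p)| ≤ √p * s) :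
    goodputGain C Q r p ≤
      goodputGainQuadraticCoeff C r p * s ^ 2 + goodputGainLinearCoeff C r p * s := by
  have hEE := goodputAverage_le_sup'_sup'_mul_mul hC hQ hQ
  have hJE := goodputAverage_le_sup'_right_mul hC (fun _ _ : ι => sq_nonneg p) hQ
  have hEJ := goodputAverage_le_sup'_left_mul hC hQ (fun _ _ : ι => sq_nonneg p)
  have hsq : √p * s * (√p * s) = p * s ^ 2 := by rw [mul_mul_mul_comm, Real.mul_self_sqrt hp, sq]
  rw [hsq] at hEE
  rw [goodputGain_eq_goodputAverage_deviation]
  refine (add_le_add_three (mul_le_mul_of_nonneg_left hEE hr)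
    (mul_le_mul_of_nonneg_left hJE hr) hEJ).trans_eq ?_
  simp only [goodputGainQuadraticCoeff, goodputGainLinearCoeff, ← sum_mul]
  ring

theorem goodput_gain_upper_bound_general [Nonempty ι] {C : ι × ι × ι × ι → ℝ}
    (hC : ∀ x, 0 ≤ C x) {Q : Matrix ι ι ℝ} {r s : ℝ} (hr : 0 ≤ r) (hs : 0 ≤ s)
    (hQ : ∀ l, (∑ m, |Q l m - 1 / (Fintype.card ι : ℝ)|) ^ 2 ≤ Fintype.card ι * s ^ 2) :
    goodputGain C Q r (1 / Fintype.card ι) ≤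
      goodputGainQuadraticCoeff C r (1 / Fintype.card ι) * s ^ 2
        + goodputGainLinearCoeff C r (1 / Fintype.card ι) * s :=
  goodputGain_le_of_sum_abs_deviation_le hC hr (by positivity) fun l =>
    sum_abs_one_div_mul_le (Nat.cast_pos.2 Fintype.card_pos) hs (hQ l)

end GoodputGain

end

/-- Proposition 1: for a fixed feedback delay of `D` samples, the ergodic goodput
gain `Δρ(D) = r·ρ1(D) + (1−r)·ρ2(D) − ρ∞` of the limited feedback beamforming
system with other-cell interference is bounded as
`Δρ(D) ≤ a·(√λ)^{2D} + b·(√λ)^D`, where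
`a = r·Σ_{k1D,k2D} (max_{k10,k20} C)·π` and
`b = r·Σ_{k1D,k10,k2D} (max_{k20} C)·π²·√π + Σ_{k1D,k2D,k20} (max_{k10} C)·π²·√π`,
with `π = 1/N`, `P` row stochastic, and the Markov convergence bound
`(Σ_m |(P^D)_{lm} − 1/N|)² ≤ N·λ^D`. -/
theorem goodput_gain_upper_bound (N : ℕ) [NeZero N]
    (P : Matrix (Fin N) (Fin N) ℝ)
    (hP0 : ∀ l m, 0 ≤ P l m) (hP1 : ∀ l, ∑ m, P l m = 1)
    (lam : ℝ) (hlam0 : 0 ≤ lam) (hlam1 : lam ≤ 1) (D : ℕ)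
    (hconv : ∀ l, (∑ m, |(P ^ D) l m - 1 / (N : ℝ)|) ^ 2 ≤ (N : ℝ) * lam ^ D)
    (r : ℝ) (hr0 : 0 ≤ r) (hr1 : r ≤ 1)
    (C : Fin N × Fin N × Fin N × Fin N → ℝ) (hC : ∀ x, 0 ≤ C x) :
    r * (∑ k1D : Fin N, ∑ k10 : Fin N, ∑ k2D : Fin N, ∑ k20 : Fin N,
          C (k1D, k10, k2D, k20) * (P ^ D) k1D k10 * (P ^ D) k2D k20
            * (1 / (N : ℝ)) ^ 2)
      + (1 - r) * (∑ k1D : Fin N, ∑ k10 : Fin N, ∑ k2D : Fin N, ∑ k20 : Fin N,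
          C (k1D, k10, k2D, k20) * (P ^ D) k1D k10 * (1 / (N : ℝ)) ^ 3)
      - (∑ k1D : Fin N, ∑ k10 : Fin N, ∑ k2D : Fin N, ∑ k20 : Fin N,
          C (k1D, k10, k2D, k20) * (1 / (N : ℝ)) ^ 4)
    ≤ (r * ∑ k1D : Fin N, ∑ k2D : Fin N,
          (Finset.univ.sup' Finset.univ_nonempty fun k10 : Fin N =>
            Finset.univ.sup' Finset.univ_nonempty fun k20 : Fin N =>
              C (k1D, k10, k2D, k20)) * (1 / (N : ℝ)))
        * Real.sqrt lam ^ (2 * D)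
      + (r * (∑ k1D : Fin N, ∑ k10 : Fin N, ∑ k2D : Fin N,
            (Finset.univ.sup' Finset.univ_nonempty fun k20 : Fin N =>
                C (k1D, k10, k2D, k20))
              * (1 / (N : ℝ)) ^ 2 * Real.sqrt (1 / (N : ℝ)))
          + (∑ k1D : Fin N, ∑ k2D : Fin N, ∑ k20 : Fin N,
            (Finset.univ.sup' Finset.univ_nonempty fun k10 : Fin N =>
                C (k1D, k10, k2D, k20))
              * (1 / (N : ℝ)) ^ 2 * Real.sqrt (1 / (N : ℝ))))
        * Real.sqrt lam ^ D := by
  have hdecay : (√lam ^ D) ^ 2 = lam ^ D := by rw [← pow_mul, pow_mul', Real.sq_sqrt hlam0]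
  simpa only [goodputGain, goodputGainQuadraticCoeff, goodputGainLinearCoeff, Fintype.card_fin,
    ← pow_mul'] using goodput_gain_upper_bound_general hC hr0
      (pow_nonneg (Real.sqrt_nonneg lam) D) (by simpa only [Fintype.card_fin, hdecay] using hconv)
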